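/- arXiv:2401.04699 — 2 statements merged into one kernel-verified Lean document; each statement's English description precedes it below -/
import Mathlib

section
/- Let h ≥ 2 and k ≥ 6 be integers, and let A = {0 = a_0 < a_1 < ... < a_{k-1}} be a set of k integers in normal form (i.e., gcd of its elements equals 1). If |hA| = hk + 3h - 4, then A ⊆ [0, k+2], i.e., a_{k-1} ≤ k+2. -/
open Finset Pointwise

/-- The `h`-fold sumset: all sums of `h` elements of `A` (with repetition). -/
def hfold : ℕ → Finset ℤ → Finset ℤ
  | 0, _ => {0}
  | n + 1, A => A + hfold n A

lemma card_union_add_add_card_inter_add_le {G : Type*} [AddCommGroup G] [DecidableEq G]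
    (X Y B : Finset G) :
    #((X ∪ Y) + B) + #((X ∩ Y) + B) ≤ #(X + B) + #(Y + B) := by
  rw [union_add, ← card_union_add_card_inter (X + B) (Y + B)]
  exact Nat.add_le_add_left (card_le_card inter_add_subset) _

/-- Among the nonempty sets `X` with `X + B` not the whole group, the expansion `#(X + B) - #X`
is minimised by a subgroup. -/
lemma exists_addSubgroup_min_expansion {G : Type*} [AddCommGroup G] [Fintype G] [DecidableEq G]
    (B : Finset G) (hB : B ≠ univ) :
    ∃ (K : AddSubgroup G) (H : Finset G), (∀ x, x ∈ H ↔ x ∈ K) ∧ H + B ≠ univ ∧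
      ∀ X : Finset G, X.Nonempty → X + B ≠ univ → #(H + B) + #X ≤ #(X + B) + #H := by
  classical
  let P : Finset G → Prop := fun X => X.Nonempty ∧ X + B ≠ univ
  let d : Finset G → ℤ := fun X => #(X + B) - #X
  obtain ⟨X₁, hX₁, hd₁⟩ := exists_min_image (univ.filter P) d
    ⟨0, by simp [P, hB]⟩
  obtain ⟨X₀, hX₀, hc₀⟩ := exists_min_image (univ.filter fun X => P X ∧ d X = d X₁) card
    ⟨X₁, by simpa using hX₁⟩
  simp only [mem_filter, mem_univ, true_and] at hX₁ hd₁ hX₀ hc₀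
  obtain ⟨⟨hne, huniv⟩, hd₀⟩ := hX₀
  have hdual : (2 : ℤ) * #X₀ + d X₀ ≤ Fintype.card G := by
    have hYne : (-(X₀ + B)ᶜ).Nonempty := by
      simpa [nonempty_iff_ne_empty] using huniv
    have hsub : -(X₀ + B)ᶜ + B ⊆ (-X₀)ᶜ := by
      intro z hz
      obtain ⟨y, hy, b, hb, rfl⟩ := mem_add.1 hz
      simp only [mem_neg', mem_compl] at hy ⊢
      intro hx
      exact hy (mem_add.2 ⟨_, hx, b, hb, by abel⟩)
    have hcard := card_le_card hsub
    have hYuniv : -(X₀ + B)ᶜ + B ≠ univ := by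
      intro h
      rw [h, card_univ, card_compl, card_neg] at hcard
      have := card_pos.2 hne
      have := card_le_univ X₀
      omega
    have hd := hd₁ _ ⟨hYne, hYuniv⟩
    have h1 : (#(-(X₀ + B)ᶜ) : ℤ) = Fintype.card G - #(X₀ + B) := by
      rw [card_neg, card_compl, Nat.cast_sub (card_le_univ _)]
    have h2 : (#(-(X₀ + B)ᶜ + B) : ℤ) ≤ Fintype.card G - #X₀ := by
      have := card_le_univ X₀
      rw [card_compl, card_neg] at hcard
      omega
    have h3 := hc₀ _ ⟨⟨hYne, hYuniv⟩, by simp only [d] at *; omega⟩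
    simp only [d] at *
    omega
  have hkey : ∀ X Y : Finset G, #X = #X₀ → #Y = #X₀ → #(X + B) = #(X₀ + B) →
      #(Y + B) = #(X₀ + B) → (X ∩ Y).Nonempty → X = Y := by
    intro X Y hX hY hXB hYB hXY
    have hsm := card_union_add_add_card_inter_add_le X Y B
    have hui := card_union_add_card_inter X Y
    have hipos := card_pos.2 hXY
    have hI : X ∩ Y + B ≠ univ := by
      intro h
      have h1 : #(X ∩ Y + B) ≤ #(X + B) := card_le_card (add_subset_add_right inter_subset_left)
      rw [h, hXB] at h1
      exact huniv (eq_univ_of_card _ (le_antisymm (card_le_univ _) h1))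
    have hdI := hd₁ _ ⟨hXY, hI⟩
    have hU : (X ∪ Y) + B ≠ univ := by
      intro h
      rw [h, card_univ] at hsm
      simp only [d] at *
      omega
    have hdU := hd₁ _ ⟨hXY.mono (inter_subset_left.trans subset_union_left), hU⟩
    have hcI := hc₀ _ ⟨⟨hXY, hI⟩, by simp only [d] at *; omega⟩
    have h1 : X ∩ Y = X := eq_of_subset_of_card_le inter_subset_left (by omega)
    have h2 : X ∩ Y = Y := eq_of_subset_of_card_le inter_subset_right (by omega)
    exact h1.symm.trans h2
  obtain ⟨x₀, hx₀⟩ := hne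
  have htrans : ∀ x : G, #((x +ᵥ X₀) + B) = #(X₀ + B) := fun x => by
    rw [vadd_add_assoc, card_vadd_finset]
  have h0H : (0 : G) ∈ -x₀ +ᵥ X₀ := mem_vadd_finset.2 ⟨x₀, hx₀, by simp⟩
  have hstab : ∀ x ∈ -x₀ +ᵥ X₀, x +ᵥ (-x₀ +ᵥ X₀) = -x₀ +ᵥ X₀ := by
    intro x hx
    refine hkey _ _ (by simp) (by simp) (by rw [vadd_vadd, htrans]) (htrans _)
      ⟨x, mem_inter.2 ⟨mem_vadd_finset.2 ⟨0, h0H, by simp⟩, hx⟩⟩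
  refine ⟨{ carrier := (-x₀ +ᵥ X₀ : Finset G)
            zero_mem' := h0H
            add_mem' := ?_
            neg_mem' := ?_ }, -x₀ +ᵥ X₀, fun x => Iff.rfl, ?_, ?_⟩
  · intro a b ha hb
    rw [mem_coe] at *
    rw [← hstab a ha]
    exact mem_vadd_finset.2 ⟨b, hb, rfl⟩
  · intro a ha
    simp only [mem_coe] at *
    have h := h0H
    rw [← hstab a ha] at h
    obtain ⟨y, hy, hay⟩ := mem_vadd_finset.1 h
    rw [vadd_eq_add] at hay
    rwa [neg_eq_of_add_eq_zero_right hay]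
  · intro h
    have h1 := htrans (-x₀)
    rw [h] at h1
    exact huniv (eq_univ_of_card _ h1.symm)
  · intro X hX hXB
    have h1 := hd₁ X ⟨hX, hXB⟩
    rw [htrans, card_vadd_finset]
    simp only [d] at *
    omega

/-- Pigeonhole in a coset: two subsets of cosets of `H` with more than `#H` elements in total have
a full coset as their sum. -/
lemma vadd_subset_add_of_card_lt {G : Type*} [AddCommGroup G] [DecidableEq G]
    {K : AddSubgroup G} {H X Y : Finset G} {x y : G} (hH : ∀ z, z ∈ H ↔ z ∈ K)
    (hX : X ⊆ x +ᵥ H) (hY : Y ⊆ y +ᵥ H) (hcard : #H < #X + #Y) :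
    (x + y) +ᵥ H ⊆ X + Y := by
  intro z hz
  obtain ⟨w, hw, rfl⟩ := mem_vadd_finset.1 hz
  have hsub : ((x + y) +ᵥ w) +ᵥ -Y ⊆ x +ᵥ H := by
    intro t ht
    obtain ⟨s, hs, rfl⟩ := mem_vadd_finset.1 ht
    obtain ⟨v, hv, hvs⟩ := mem_vadd_finset.1 (hY (mem_neg'.1 hs))
    refine mem_vadd_finset.2 ⟨w - v, (hH _).2 (K.sub_mem ((hH _).1 hw) ((hH _).1 hv)), ?_⟩
    simp only [vadd_eq_add] at *
    rw [← neg_neg s, ← hvs]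
    abel
  obtain ⟨t, ht⟩ : (X ∩ (((x + y) +ᵥ w) +ᵥ -Y)).Nonempty := by
    rw [← card_pos]
    have h1 := card_union_add_card_inter X (((x + y) +ᵥ w) +ᵥ -Y)
    have h2 := card_le_card (union_subset hX hsub)
    rw [card_vadd_finset, card_neg] at h1
    rw [card_vadd_finset] at h2
    omega
  obtain ⟨htX, htY⟩ := mem_inter.1 ht
  obtain ⟨s, hs, rfl⟩ := mem_vadd_finset.1 htY
  refine mem_add.2 ⟨_, htX, -s, mem_neg'.1 hs, ?_⟩
  simp

lemma disjoint_vadd_of_sub_notMem {G : Type*} [AddCommGroup G] [DecidableEq G]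
    {K : AddSubgroup G} {H : Finset G} {x y : G} (hH : ∀ z, z ∈ H ↔ z ∈ K) (hxy : x - y ∉ K) :
    Disjoint (x +ᵥ H) (y +ᵥ H) := by
  rw [disjoint_left]
  intro z hx hy
  obtain ⟨u, hu, rfl⟩ := mem_vadd_finset.1 hx
  obtain ⟨v, hv, huv⟩ := mem_vadd_finset.1 hy
  apply hxy
  have : x - y = v - u := by
    simp only [vadd_eq_add] at huv
    rw [sub_eq_sub_iff_add_eq_add, ← huv, add_comm]
  rw [this]
  exact K.sub_mem ((hH _).1 hv) ((hH _).1 hu)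

/-- If `G` is generated by `B`, then `B + (B + B)` has at least `#B + 4` elements, and so has
`B + B` unless `B` is the union of two cosets of a subgroup of order three. In the latter case,
`C` is the nontrivial one of the two cosets. -/
lemma card_add_four_le_or_exists_coset {G : Type*} [AddCommGroup G] [Fintype G] [DecidableEq G]
    (B : Finset G) (h0 : 0 ∈ B) (hgen : ∀ K : AddSubgroup G, (∀ b ∈ B, b ∈ K) → K = ⊤)
    (hB5 : 5 ≤ #B) (hG : #B + 4 ≤ Fintype.card G) :
    #B + 4 ≤ #(B + (B + B)) ∧ (#B + 4 ≤ #(B + B) ∨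
      ∃ C : Finset G, C ⊆ B ∧ #C = 3 ∧ #B = 6 ∧ Disjoint (C + C) B) := by
  have hBne : B.Nonempty := ⟨0, h0⟩
  have hBuniv : B ≠ univ := by
    rintro h
    rw [← card_univ, ← h] at hG
    omega
  obtain ⟨K, H, hH, hHB, hmin⟩ := exists_addSubgroup_min_expansion B hBuniv
  have h0H : (0 : G) ∈ H := (hH 0).2 K.zero_mem
  have hBsub : B ⊆ H + B := fun b hb => mem_add.2 ⟨0, h0H, b, hb, zero_add b⟩
  have hcoset : ∀ b ∈ B, b +ᵥ H ⊆ H + B := by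
    intro b hb z hz
    obtain ⟨u, hu, rfl⟩ := mem_vadd_finset.1 hz
    exact mem_add.2 ⟨u, hu, b, hb, add_comm _ _⟩
  obtain ⟨c, hcB, hcK⟩ : ∃ c ∈ B, c ∉ K := by
    by_contra! h
    apply hHB
    rw [eq_univ_iff_forall]
    intro x
    refine mem_add.2 ⟨x, (hH x).2 ?_, 0, h0, add_zero x⟩
    rw [hgen K h]
    trivial
  have hd01 : Disjoint ((0 : G) +ᵥ H) (c +ᵥ H) :=
    disjoint_vadd_of_sub_notMem hH (by simpa using hcK)
  have hMsub : ((0 : G) +ᵥ H) ∪ (c +ᵥ H) ⊆ H + B := union_subset (hcoset 0 h0) (hcoset c hcB)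
  have hMcard : #(((0 : G) +ᵥ H) ∪ (c +ᵥ H)) = 2 * #H := by
    rw [card_union_of_disjoint hd01, card_vadd_finset, card_vadd_finset, two_mul]
  have hM := card_le_card hMsub
  have hBcard := card_le_card hBsub
  constructor
  · by_cases h3 : B + (B + B) = univ
    · rwa [h3, card_univ]
    · have h2 : B + B ≠ univ := by
        intro h
        refine h3 (eq_univ_iff_forall.2 fun x => mem_add.2 ⟨0, h0, x, ?_, zero_add x⟩)
        rw [h]
        exact mem_univ x
      have e1 := hmin B hBne h2
      have e2 := hmin (B + B) (hBne.add hBne) (by rwa [add_comm])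
      rw [add_comm (B + B) B] at e2
      omega
  rw [or_iff_not_imp_left]
  intro hsmall
  push Not at hsmall
  have h2 : B + B ≠ univ := by
    intro h
    rw [h, card_univ] at hsmall
    omega
  have e1 := hmin B hBne h2
  have hH3 : #H = 3 := by
    by_contra hne
    have hH2 : #H = 2 := by omega
    obtain ⟨b, hb, hbM⟩ : ∃ b ∈ B, b ∉ ((0 : G) +ᵥ H) ∪ (c +ᵥ H) := by
      by_contra! h
      have := card_le_card (show B ⊆ _ from h)
      omega
    have hdisj : Disjoint (((0 : G) +ᵥ H) ∪ (c +ᵥ H)) (b +ᵥ H) := by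
      rw [mem_union, not_or] at hbM
      rw [disjoint_union_left]
      refine ⟨disjoint_vadd_of_sub_notMem hH fun h => hbM.1 ?_,
        disjoint_vadd_of_sub_notMem hH fun h => hbM.2 ?_⟩ <;>
      exact mem_vadd_finset.2 ⟨_, (hH _).2 (K.neg_mem h), by simp⟩
    have := card_le_card (union_subset hMsub (hcoset b hb))
    rw [card_union_of_disjoint hdisj, card_vadd_finset] at this
    omega
  have hBM : B ⊆ ((0 : G) +ᵥ H) ∪ (c +ᵥ H) := by
    rw [eq_of_subset_of_card_le hMsub (by omega)]
    exact hBsub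
  have hccK : c + c ∉ K := by
    intro hcc
    have hmem : ∀ x, x ∈ ((0 : G) +ᵥ H) ∪ (c +ᵥ H) ↔ x ∈ K ∨ x - c ∈ K := by
      intro x
      rw [mem_union, ← neg_vadd_mem_iff, ← neg_vadd_mem_iff, hH, hH]
      simp [neg_add_eq_sub]
    let L : AddSubgroup G :=
      { carrier := (((0 : G) +ᵥ H) ∪ (c +ᵥ H) : Finset G)
        zero_mem' := by simpa using Or.inl h0H
        add_mem' := by
          intro x y hx hy
          rw [mem_coe, hmem] at *
          rcases hx with hx | hx <;> rcases hy with hy | hy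
          · exact Or.inl (K.add_mem hx hy)
          · exact Or.inr (by simpa [add_sub_assoc] using K.add_mem hx hy)
          · exact Or.inr (by simpa [sub_add_eq_add_sub] using K.add_mem hx hy)
          · left
            convert K.add_mem (K.add_mem hx hy) hcc using 1
            abel
        neg_mem' := by
          intro x hx
          simp only [mem_coe, hmem] at *
          refine hx.imp K.neg_mem fun hx => ?_
          convert K.neg_mem (K.add_mem hx hcc) using 1
          abel }
    have hL := hgen L fun b hb => hBM hb
    have : ((0 : G) +ᵥ H) ∪ (c +ᵥ H) = univ := by
      rw [eq_univ_iff_forall]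
      intro x
      have : x ∈ L := by rw [hL]; trivial
      exact this
    rw [this, card_univ] at hMcard
    omega
  have hd02 : Disjoint ((0 : G) +ᵥ H) ((c + c) +ᵥ H) :=
    (disjoint_vadd_of_sub_notMem hH (by simpa using hccK)).symm
  have hd12 : Disjoint (c +ᵥ H) ((c + c) +ᵥ H) :=
    disjoint_vadd_of_sub_notMem hH (by simpa using hcK)
  have hsplit : B ∩ ((0 : G) +ᵥ H) ∪ B ∩ (c +ᵥ H) = B := by
    rw [← inter_union_distrib_left, inter_eq_left.2 hBM]
  have hsplit_card : #(B ∩ ((0 : G) +ᵥ H)) + #(B ∩ (c +ᵥ H)) = #B := by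
    rw [← card_union_of_disjoint (hd01.mono inter_subset_right inter_subset_right), hsplit]
  have hc0 := card_le_card (inter_subset_right (s₁ := B) (s₂ := (0 : G) +ᵥ H))
  have hc1 := card_le_card (inter_subset_right (s₁ := B) (s₂ := c +ᵥ H))
  rw [card_vadd_finset] at hc0 hc1
  have hB6 : #B = 6 := by
    by_contra hne
    have hBB : ∀ x y : G, #H < #(B ∩ (x +ᵥ H)) + #(B ∩ (y +ᵥ H)) →
        (x + y) +ᵥ H ⊆ B + B := fun x y h =>
      (vadd_subset_add_of_card_lt hH inter_subset_right inter_subset_right h).trans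
        (add_subset_add inter_subset_left inter_subset_left)
    have f0 := hBB 0 0 (by omega)
    have f1 := hBB 0 c (by omega)
    have f2 := hBB c c (by omega)
    rw [zero_add] at f0 f1
    have := card_le_card (union_subset (union_subset f0 f1) f2)
    rw [card_union_of_disjoint (disjoint_union_left.2 ⟨hd02, hd12⟩), hMcard,
      card_vadd_finset] at this
    omega
  refine ⟨B ∩ (c +ᵥ H), inter_subset_left, by omega, hB6, ?_⟩
  refine Disjoint.mono ?_ hBM (disjoint_union_left.2 ⟨hd02, hd12⟩).symm
  refine (add_subset_add inter_subset_right inter_subset_right).trans ?_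
  intro z hz
  obtain ⟨x, hx, y, hy, rfl⟩ := mem_add.1 hz
  obtain ⟨u, hu, rfl⟩ := mem_vadd_finset.1 hx
  obtain ⟨v, hv, rfl⟩ := mem_vadd_finset.1 hy
  exact mem_vadd_finset.2 ⟨u + v, (hH _).2 (K.add_mem ((hH _).1 hu) ((hH _).1 hv)),
    add_add_add_comm _ _ _ _⟩

/-- If `T` contains `S` and `S + l`, then in each residue class modulo `l` that it meets, `T` has
an element outside `S`. -/
lemma card_add_card_image_zmod_le {l : ℕ} (hl : 0 < l) {S T : Finset ℤ} (hST : S ⊆ T)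
    (hshift : ∀ s ∈ S, s + l ∈ T) :
    #S + #(T.image (Int.cast : ℤ → ZMod l)) ≤ #T := by
  have hsub : T.image (Int.cast : ℤ → ZMod l) ⊆ (T \ S).image Int.cast := by
    intro r hr
    obtain ⟨t₀, ht₀, rfl⟩ := mem_image.1 hr
    obtain ⟨t, ht, hmax⟩ := exists_max_image (T.filter fun t : ℤ => (t : ZMod l) = t₀) id
      ⟨t₀, by simpa using ht₀⟩
    rw [mem_filter] at ht
    refine mem_image.2 ⟨t, mem_sdiff.2 ⟨ht.1, fun hS => ?_⟩, ht.2⟩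
    have := hmax (t + l) (mem_filter.2 ⟨hshift t hS, by simpa using ht.2⟩)
    simp only [id] at this
    omega
  have h1 := (card_le_card hsub).trans card_image_le
  have h2 := card_sdiff_add_card_eq_card hST
  omega

lemma hfold_subset_hfold_succ {A : Finset ℤ} (h0 : 0 ∈ A) (n : ℕ) :
    hfold n A ⊆ hfold (n + 1) A := fun x hx => mem_add.2 ⟨0, h0, x, hx, zero_add x⟩

lemma hfold_mono {A : Finset ℤ} (h0 : 0 ∈ A) : Monotone fun n => hfold n A :=
  monotone_nat_of_le_succ (hfold_subset_hfold_succ h0)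

lemma hfold_two (A : Finset ℤ) : hfold 2 A = A + A := by
  have h : (({0} : Finset ℤ)) = 0 := rfl
  simp [hfold, h]

lemma hfold_three (A : Finset ℤ) : hfold 3 A = A + (A + A) := by
  rw [← hfold_two]
  rfl

lemma image_intCast_add (l : ℕ) (S T : Finset ℤ) :
    (S + T).image (Int.cast : ℤ → ZMod l) = S.image Int.cast + T.image Int.cast :=
  image_add (Int.castAddHom (ZMod l))

lemma addSubgroup_zmod_eq_top_of_gcd {l : ℕ} {A : Finset ℤ} (hgcd : A.gcd id = 1)
    (K : AddSubgroup (ZMod l)) (hK : ∀ b ∈ A.image (Int.cast : ℤ → ZMod l), b ∈ K) :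
    K = ⊤ := by
  obtain ⟨g, hg⟩ := A.gcd_eq_sum_mul id
  have h1 : ((1 : ℤ) : ZMod l) ∈ K := by
    rw [← hgcd, hg, Int.cast_sum]
    refine K.sum_mem fun a ha => ?_
    rw [id, Int.cast_mul, mul_comm, ← zsmul_eq_mul]
    exact K.zsmul_mem (hK _ (mem_image_of_mem _ ha)) _
  rw [eq_top_iff]
  intro x _
  obtain ⟨z, rfl⟩ := ZMod.intCast_surjective x
  simpa using K.zsmul_mem h1 z

/-- The case of a set whose residues occupy two cosets of a subgroup of order three. -/
lemma card_add_self_of_coset {l : ℕ} (hl : 0 < l) {A : Finset ℤ} (h0 : 0 ∈ A)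
    (hlA : (l : ℤ) ∈ A) (hA : #A = 7) {C : Finset (ZMod l)}
    (hCA : C ⊆ A.image Int.cast) (hC : #C = 3) (hB : #(A.image (Int.cast : ℤ → ZMod l)) = 6)
    (hdisj : Disjoint (C + C) (A.image Int.cast)) :
    18 ≤ #(A + A) := by
  have hU := card_add_card_image_zmod_le hl (S := A) (T := A ∪ (A + {(l : ℤ)}))
    subset_union_left
    (fun s hs => mem_union_right _ (mem_add.2 ⟨s, hs, l, mem_singleton_self _, rfl⟩))
  have himg : (A ∪ (A + {(l : ℤ)})).image (Int.cast : ℤ → ZMod l) = A.image Int.cast := by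
    rw [image_union, image_intCast_add, image_singleton]
    have h : (({0} : Finset (ZMod l))) = 0 := rfl
    simp [h]
  rw [himg, hA, hB] at hU
  let A₁ := A.filter fun a : ℤ => (a : ZMod l) ∈ C
  have hA₁ : A₁.image (Int.cast : ℤ → ZMod l) = C := by
    ext x
    simp only [A₁, mem_image, mem_filter]
    constructor
    · rintro ⟨a, ⟨_, ha⟩, rfl⟩
      exact ha
    · intro hx
      obtain ⟨a, ha, rfl⟩ := mem_image.1 (hCA hx)
      exact ⟨a, ⟨ha, hx⟩, rfl⟩
  have hA₁card : 3 ≤ #A₁ := by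
    rw [← hC, ← hA₁]
    exact card_image_le
  have hne : A₁.Nonempty := card_pos.1 (by omega)
  have hcd := cauchy_davenport_add_of_linearOrder_isCancelAdd hne hne
  have hd : Disjoint (A ∪ (A + {(l : ℤ)})) (A₁ + A₁) := by
    rw [disjoint_left]
    intro x hx hx'
    have h1 := mem_image_of_mem (Int.cast : ℤ → ZMod l) hx
    have h2 := mem_image_of_mem (Int.cast : ℤ → ZMod l) hx'
    rw [himg] at h1
    rw [image_intCast_add, hA₁] at h2
    exact disjoint_left.1 hdisj h2 h1
  have hsub : (A ∪ (A + {(l : ℤ)})) ∪ (A₁ + A₁) ⊆ A + A := by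
    refine union_subset (union_subset ?_ ?_) ?_
    · exact fun x hx => mem_add.2 ⟨0, h0, x, hx, zero_add x⟩
    · exact add_subset_add_left (singleton_subset_iff.2 hlA)
    · exact add_subset_add (filter_subset _ _) (filter_subset _ _)
  have := card_le_card hsub
  rw [card_union_of_disjoint hd] at this
  omega

lemma card_image_zmod_add_one {l : ℕ} (hl : 0 < l) {A : Finset ℤ} (h0 : 0 ∈ A)
    (hlA : (l : ℤ) ∈ A) (hnn : ∀ a ∈ A, 0 ≤ a) (hle : ∀ a ∈ A, a ≤ l) :
    #(A.image (Int.cast : ℤ → ZMod l)) + 1 = #A := by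
  have himg : A.image (Int.cast : ℤ → ZMod l) = (A.erase l).image Int.cast := by
    rw [← insert_erase hlA, image_insert, erase_insert (notMem_erase _ _)]
    refine insert_eq_of_mem (mem_image.2 ⟨0, mem_erase.2 ⟨?_, h0⟩, by simp⟩)
    omega
  rw [himg, card_image_of_injOn, card_erase_add_one hlA]
  intro x hx y hy hxy
  rw [mem_coe, mem_erase] at hx hy
  have hx1 := hnn x hx.2
  have hx2 := hle x hx.2
  have hy1 := hnn y hy.2
  have hy2 := hle y hy.2
  have h := (ZMod.intCast_eq_intCast_iff' x y l).1 hxy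
  rwa [Int.emod_eq_of_lt hx1 (by omega), Int.emod_eq_of_lt hy1 (by omega)] at h

theorem stmt0 (h k : ℕ) (hh : 2 ≤ h) (hk : 6 ≤ k) (A : Finset ℤ)
    (hcard : A.card = k) (h0 : (0 : ℤ) ∈ A) (hnn : ∀ a ∈ A, 0 ≤ a)
    (hgcd : A.gcd id = 1)
    (hsum : (hfold h A).card = h * k + 3 * h - 4) :
    ∀ a ∈ A, a ≤ (k : ℤ) + 2 := by
  by_contra! hbig
  obtain ⟨a, ha, hka⟩ := hbig
  obtain ⟨m, hmA, hmax⟩ := exists_max_image A id ⟨0, h0⟩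
  obtain ⟨l, rfl⟩ := Int.eq_ofNat_of_zero_le (hnn m hmA)
  have hkl : k + 3 ≤ l := by
    have := hmax a ha
    simp only [id] at this
    omega
  have hl : 0 < l := by omega
  have : NeZero l := ⟨hl.ne'⟩
  have hBcard := card_image_zmod_add_one hl h0 hmA hnn hmax
  have hstep : ∀ n, #(hfold n A) + #((hfold (n + 1) A).image (Int.cast : ℤ → ZMod l)) ≤
      #(hfold (n + 1) A) := fun n =>
    card_add_card_image_zmod_le hl (hfold_subset_hfold_succ h0 n)
      fun s hs => mem_add.2 ⟨l, hmA, s, hs, add_comm _ _⟩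
  obtain ⟨h3, h2⟩ := card_add_four_le_or_exists_coset (A.image (Int.cast : ℤ → ZMod l))
    (mem_image.2 ⟨0, h0, by simp⟩) (addSubgroup_zmod_eq_top_of_gcd hgcd) (by omega)
    (by rw [ZMod.card]; omega)
  have hbase : 2 * k + 3 ≤ #(hfold 2 A) := by
    rcases h2 with h2 | ⟨C, hCB, hC, hB6, hdisj⟩
    · have h := hstep 1
      have hA1 : hfold 1 A = A := add_zero A
      rw [hA1, one_add_one_eq_two, hfold_two, image_intCast_add] at h
      rw [hfold_two]
      omega
    · have := card_add_self_of_coset hl h0 hmA (by omega) hCB hC hB6 hdisj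
      rw [hfold_two]
      omega
  have hlower : ∀ n, (n + 2) * (k + 3) ≤ #(hfold (n + 2) A) + 3 := by
    intro n
    induction n with
    | zero => simpa using by omega
    | succ n ih =>
      have hs := hstep (n + 2)
      have hm := card_le_card (image_subset_image (f := (Int.cast : ℤ → ZMod l))
        (hfold_mono h0 (show 3 ≤ n + 2 + 1 by omega)))
      simp only [hfold_three, image_intCast_add] at hm
      rw [show n + 1 + 2 = n + 2 + 1 by ring, add_mul]
      omega
  obtain ⟨n, rfl⟩ := Nat.exists_eq_add_of_le' hh
  have := hlower n
  rw [mul_add] at this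
  omega
end

section
/- Let h ≥ 2 and k ≥ 5 be integers, and let A = {0 = a_0 < a_1 < ... < a_{k-1}} be a set of k integers in normal form. If |hA| < hk + 3h - 4, then A ⊆ [0, k+2], i.e., a_{k-1} ≤ k+2. -/
open Finset Pointwise

set_option maxHeartbeats 4000000 in
/-- Five integers `0 < a < b < c < l` without common divisor have at least twelve pair sums as soon as
`8 ≤ l`. -/
theorem twelve_le_card_add_self {a b c l : ℤ} (ha : 0 < a) (hab : a < b) (hbc : b < c)
    (hcl : c < l) (hl : 8 ≤ l)
    (hg : ∀ g : ℤ, 0 < g → g ∣ a → g ∣ b → g ∣ c → g ∣ l → g = 1) :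
    12 ≤ #(({0, a, b, c, l} : Finset ℤ) + {0, a, b, c, l}) := by
  by_contra! hlt
  generalize hA : ({0, a, b, c, l} : Finset ℤ) = A at hlt
  have mem : ∀ x ∈ A, ∀ y ∈ A, x + y ∈ A + A := fun x hx y hy => add_mem_add hx hy
  have h0 : (0 : ℤ) ∈ A := by simp [← hA]
  have h1 : a ∈ A := by simp [← hA]
  have h2 : b ∈ A := by simp [← hA]
  have h3 : c ∈ A := by simp [← hA]
  have h4 : l ∈ A := by simp [← hA]
  -- `N` marks the sums which are not already obtained by adding `0` or `l` to an element of `A`.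
  obtain ⟨N, hN⟩ : ∃ N : ℤ → Prop, ∀ x, N x ↔
      ¬ (x = a ∨ x = b ∨ x = c ∨ x = l ∨ x = l + a ∨ x = l + b) := ⟨_, fun _ => Iff.rfl⟩
  have key : ∀ p ∈ A + A, ∀ q ∈ A + A, ∀ r ∈ A + A, 0 < p → p < q → q < r → r < l + c →
      N p → N q → N r → False := by
    intro p hp q hq r hr h0p hpq hqr hrl hp' hq' hr'
    rw [hN] at hp' hq' hr'
    have hsub : ({0, a, b, c, l, l + a, l + b, l + c, l + l, p, q, r} : Finset ℤ) ⊆ A + A := by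
      intro x hx
      simp only [mem_insert, mem_singleton] at hx
      rcases hx with rfl | rfl | rfl | rfl | rfl | rfl | rfl | rfl | rfl | rfl | rfl | rfl
      · simpa using mem _ h0 _ h0
      · simpa using mem _ h0 _ h1
      · simpa using mem _ h0 _ h2
      · simpa using mem _ h0 _ h3
      · simpa using mem _ h0 _ h4
      · exact mem _ h4 _ h1
      · exact mem _ h4 _ h2
      · exact mem _ h4 _ h3
      · exact mem _ h4 _ h4
      · exact hp
      · exact hq
      · exact hr
    have hcard := card_le_card hsub
    repeat rw [card_insert_of_notMem (by simp only [mem_insert, mem_singleton]; omega)] at hcard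
    rw [card_singleton] at hcard
    omega
  have haa := mem a h1 a h1
  have hab' := mem a h1 b h2
  have hac' := mem a h1 c h3
  have hbb' := mem b h2 b h2
  have hbc' := mem b h2 c h3
  have hcc := mem c h3 c h3
  have k1 := key _ haa _ hab' _ hbc' (by omega) (by omega) (by omega) (by omega)
  have k2 := key _ haa _ hab' _ hcc (by omega) (by omega) (by omega) (by omega)
  have k3 := key _ haa _ hbc' _ hcc (by omega) (by omega) (by omega) (by omega)
  have k4 := key _ hab' _ hbc' _ hcc (by omega) (by omega) (by omega) (by omega)
  have kx (x : ℤ) (hx : x ∈ A + A) (h1x : a + b < x) (h2x : x < b + c) :=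
    And.intro (key _ haa _ hab' _ hx (by omega) (by omega) (by omega) (by omega)) <|
    And.intro (key _ haa _ hx _ hbc' (by omega) (by omega) (by omega) (by omega)) <|
    And.intro (key _ haa _ hx _ hcc (by omega) (by omega) (by omega) (by omega)) <|
    And.intro (key _ hab' _ hx _ hbc' (by omega) (by omega) (by omega) (by omega)) <|
    And.intro (key _ hab' _ hx _ hcc (by omega) (by omega) (by omega) (by omega))
      (key _ hx _ hbc' _ hcc (by omega) (by omega) (by omega) (by omega))
  obtain ⟨p1, p2, p3, p4, p5, p6⟩ := kx _ hbb' (by omega) (by omega)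
  obtain ⟨q1, q2, q3, q4, q5, q6⟩ := kx _ hac' (by omega) (by omega)
  have r (h : ¬ a + c = b + b) (h' : N (a + a) ∨ N (c + c)) (hac : N (a + c))
      (hbb : N (b + b)) : False := by
    rcases h' with h' | h' <;> rcases lt_or_gt_of_ne h with hlt | hlt
    · exact key _ haa _ hac' _ hbb' (by omega) (by omega) (by omega) (by omega) h' hac hbb
    · exact key _ haa _ hbb' _ hac' (by omega) (by omega) (by omega) (by omega) h' hbb hac
    · exact key _ hac' _ hbb' _ hcc (by omega) (by omega) (by omega) (by omega) hac hbb h'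
    · exact key _ hbb' _ hac' _ hcc (by omega) (by omega) (by omega) (by omega) hbb hac h'
  have s1 : (a + a = b ∨ a + a = c ∨ a + a = l) ∨ N (a + a) := by rw [hN]; omega
  have s2 : (a + b = c ∨ a + b = l) ∨ N (a + b) := by rw [hN]; omega
  have s3 : a + c = l ∨ N (a + c) := by rw [hN]; omega
  have s4 : (b + b = c ∨ b + b = l ∨ b + b = l + a) ∨ N (b + b) := by rw [hN]; omega
  have s5 : (b + c = l ∨ b + c = l + a) ∨ N (b + c) := by rw [hN]; omega
  have s6 : (c + c = l ∨ c + c = l + a ∨ c + c = l + b) ∨ N (c + c) := by rw [hN]; omega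
  have hm (g x : ℤ) (hx : x = g ∨ x = g * 2 ∨ x = g * 3 ∨ x = g * 4 ∨ x = g * 5 ∨ x = g * 6 ∨
      x = g * 7) : g ∣ x := by
    rcases hx with rfl | rfl | rfl | rfl | rfl | rfl | rfl <;> simp
  clear kx key mem hlt hA hN haa hab' hac' hbb' hbc' hcc
  rcases s1 with (s1 | s1 | s1) | s1 <;> rcases s2 with (s2 | s2) | s2 <;>
    rcases s3 with s3 | s3 <;> try (exfalso; omega)
  all_goals try first
    | exact q1 (by assumption) (by assumption) (by assumption)
  all_goals rcases s5 with (s5 | s5) | s5 <;> try (exfalso; omega)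
  all_goals try first
    | exact k1 (by assumption) (by assumption) (by assumption)
    | exact q2 (by assumption) (by assumption) (by assumption)
    | exact q4 (by assumption) (by assumption) (by assumption)
  all_goals rcases s6 with (s6 | s6 | s6) | s6 <;> try (exfalso; omega)
  all_goals try first
    | exact k3 (by assumption) (by assumption) (by assumption)
    | exact k4 (by assumption) (by assumption) (by assumption)
    | exact k2 (by assumption) (by assumption) (by assumption)
    | exact q3 (by assumption) (by assumption) (by assumption)
    | exact q5 (by assumption) (by assumption) (by assumption)
    | exact q6 (by assumption) (by assumption) (by assumption)
  all_goals rcases s4 with (s4 | s4 | s4) | s4 <;> try (exfalso; omega)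
  all_goals try first
    | exact p1 (by assumption) (by assumption) (by assumption)
    | exact p2 (by assumption) (by assumption) (by assumption)
    | exact p3 (by assumption) (by assumption) (by assumption)
    | exact p4 (by assumption) (by assumption) (by assumption)
    | exact p5 (by assumption) (by assumption) (by assumption)
    | exact p6 (by assumption) (by assumption) (by assumption)
  all_goals clear p1 p2 p3 p4 p5 p6 q1 q2 q3 q4 q5 q6 k1 k2 k3 k4
  all_goals try first
    | (have := hg a (by omega) (hm _ _ (by omega)) (hm _ _ (by omega)) (hm _ _ (by omega))
        (hm _ _ (by omega)); omega)
    | (have := hg (b - a) (by omega) (hm _ _ (by omega)) (hm _ _ (by omega)) (hm _ _ (by omega))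
        (hm _ _ (by omega)); omega)
    | (have := hg (c - b) (by omega) (hm _ _ (by omega)) (hm _ _ (by omega)) (hm _ _ (by omega))
        (hm _ _ (by omega)); omega)
  all_goals by_cases hr : a + c = b + b
  all_goals first
    | exact r hr (by tauto) (by assumption) (by assumption)
    | (have := hg a (by omega) (hm _ _ (by omega)) (hm _ _ (by omega)) (hm _ _ (by omega))
        (hm _ _ (by omega)); omega)
    | (have := hg (b - a) (by omega) (hm _ _ (by omega)) (hm _ _ (by omega)) (hm _ _ (by omega))
        (hm _ _ (by omega)); omega)

/-- If `S + B` has at most one element more than `S`, then it is stable under adding `B`. -/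
theorem add_add_eq_of_card_add_le {G : Type*} [AddCommGroup G] [DecidableEq G] {S B : Finset G}
    (h0 : 0 ∈ B) (hB : 3 ≤ #B) (hS : #(S + B) ≤ #S + 1) : S + B + B = S + B := by
  have hSB : S ⊆ S + B := subset_add_left S h0
  by_cases hx : ∃ x ∈ S + B, x ∉ S
  swap
  · push Not at hx
    have hT := hSB.antisymm hx
    rw [← hT, ← hT]
  obtain ⟨x, hxT, hxS⟩ := hx
  have hT : S + B = insert x S := by
    symm
    apply eq_of_subset_of_card_le (insert_subset hxT hSB)
    rwa [card_insert_of_notMem hxS]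
  have htrans : ∀ b ∈ B, ∀ s ∈ S, s + b = x ∨ s + b ∈ S := fun b hb s hs => by
    simpa [hT] using add_mem_add hs hb
  -- every nonzero translate of `S` by an element of `B` contains `x`
  have hrep : ∀ b ∈ B, b ≠ 0 → ∃ s ∈ S, s + b = x := by
    intro b hb hb0
    by_contra! hne
    have himg : S.image (· + b) = S := by
      apply eq_of_subset_of_card_le
      · intro y hy
        obtain ⟨s, hs, rfl⟩ := mem_image.1 hy
        exact (htrans b hb s hs).resolve_left (hne s hs)
      · rw [card_image_of_injective _ (add_left_injective b)]
    obtain ⟨s, hs, b', hb', rfl⟩ := mem_add.1 hxT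
    have hsb : s + b ∈ S := himg ▸ mem_image_of_mem (· + b) hs
    rcases htrans b' hb' _ hsb with h | h
    · exact hb0 (by simpa [add_right_comm s b b'] using h)
    · rw [add_right_comm, ← himg] at h
      obtain ⟨t, ht, h⟩ := mem_image.1 h
      exact hxS (add_right_cancel h ▸ ht)
  refine (subset_add_left _ h0).antisymm' ?_
  intro y hy
  obtain ⟨t, ht, b, hb, rfl⟩ := mem_add.1 hy
  rw [hT, mem_insert] at ht
  rcases ht with rfl | ht
  swap
  · exact add_mem_add ht hb
  by_cases hb0 : b = 0
  · rwa [hb0, add_zero]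
  obtain ⟨b', hb', hne⟩ : ∃ b' ∈ B, b' ∉ ({0, b} : Finset G) :=
    exists_mem_notMem_of_card_lt_card (card_le_two.trans_lt hB)
  simp only [mem_insert, mem_singleton, not_or] at hne
  obtain ⟨s, hs, rfl⟩ := hrep b' hb' hne.1
  rcases htrans b hb s hs with h | h
  · exact absurd (add_left_cancel h).symm hne.2
  · rw [add_right_comm]
    exact add_mem_add h hb'

/-- A nonempty finite set stable under a generating set is everything. -/
theorem eq_univ_of_add_eq {G : Type*} [AddCommGroup G] [Fintype G] [DecidableEq G]
    {T B : Finset G} (hgen : ∀ H : AddSubgroup G, (∀ b ∈ B, b ∈ H) → H = ⊤) (hT : T.Nonempty)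
    (h : T + B = T) : T = univ := by
  have hstab : AddAction.stabilizer G T = ⊤ := by
    apply hgen
    intro b hb
    rw [AddAction.mem_stabilizer_iff]
    apply eq_of_subset_of_card_le
    · intro y hy
      obtain ⟨t, ht, rfl⟩ := mem_vadd_finset.1 hy
      rw [vadd_eq_add, add_comm, ← h]
      exact add_mem_add ht hb
    · rw [card_vadd_finset]
  obtain ⟨t, ht⟩ := hT
  rw [eq_univ_iff_forall]
  intro x
  have hx : x - t ∈ AddAction.stabilizer G T := hstab ▸ AddSubgroup.mem_top _
  rw [AddAction.mem_stabilizer_iff] at hx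
  rw [← hx, mem_vadd_finset]
  exact ⟨t, ht, by simp⟩

theorem card_le_card_mul_self_of_lt_three_halves {G : Type*} [CommGroup G] [Fintype G]
    [DecidableEq G] {B : Finset G} (h1 : 1 ∈ B)
    (hgen : ∀ H : Subgroup G, (∀ b ∈ B, b ∈ H) → H = ⊤) (h : 2 * #(B * B) < 3 * #B) :
    Fintype.card G ≤ #(B * B) := by
  have h' : (#(B * B) : ℚ) < (3 / 2 : ℚ) * #B := by
    have : (2 * #(B * B) : ℚ) < 3 * #B := mod_cast h
    linarith
  rw [← card_inv_mul_of_doubling_lt_three_halves h', ← card_univ]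
  apply card_le_card
  intro x _
  have htop := hgen (invMulSubgroup B h') fun b hb => by
    rw [← SetLike.mem_coe, invMulSubgroup_eq_inv_mul]
    exact Set.mem_mul.2 ⟨1, by simpa using h1, b, hb, one_mul b⟩
  have hx : x ∈ (invMulSubgroup B h' : Set G) := by simp [htop]
  rw [invMulSubgroup_eq_inv_mul] at hx
  exact_mod_cast hx

theorem card_le_card_add_self_of_lt_three_halves {G : Type*} [AddCommGroup G] [Fintype G]
    [DecidableEq G] {B : Finset G} (h0 : 0 ∈ B)
    (hgen : ∀ H : AddSubgroup G, (∀ b ∈ B, b ∈ H) → H = ⊤) (h : 2 * #(B + B) < 3 * #B) :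
    Fintype.card G ≤ #(B + B) := by
  rw [← Fintype.card_multiplicative]
  refine card_le_card_mul_self_of_lt_three_halves (G := Multiplicative G) (B := B) h0 ?_ h
  intro H hH
  have := hgen (Subgroup.toAddSubgroup' H) hH
  ext x
  simp only [Subgroup.mem_top, iff_true]
  have hx : x.toAdd ∈ Subgroup.toAddSubgroup' H := this ▸ AddSubgroup.mem_top _
  exact hx

/-- Passing from `X` to a superset `Y` of `X` and `X + l` gains at least one element in each
residue class modulo `l` that meets `Y`. -/
theorem card_add_card_image_le {l : ℕ} (hl : 0 < l) {X Y : Finset ℤ} (hXY : X ⊆ Y)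
    (hXl : ∀ x ∈ X, x + l ∈ Y) : #X + #(Y.image (Int.cast : ℤ → ZMod l)) ≤ #Y := by
  have hsub : X.image (· + (l : ℤ)) ⊆ Y := by
    intro y hy
    obtain ⟨x, hx, rfl⟩ := mem_image.1 hy
    exact hXl x hx
  have himg : Y.image (Int.cast : ℤ → ZMod l) ⊆
      (Y \ X.image (· + (l : ℤ))).image Int.cast := by
    intro r hr
    have hne : (Y.filter fun y : ℤ => (y : ZMod l) = r).Nonempty := by
      obtain ⟨y, hy, hyr⟩ := mem_image.1 hr
      exact ⟨y, by simp [hy, hyr]⟩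
    obtain ⟨y, hy, hmin⟩ := exists_min_image _ id hne
    rw [mem_filter] at hy
    refine mem_image.2 ⟨y, mem_sdiff.2 ⟨hy.1, fun hyX => ?_⟩, hy.2⟩
    obtain ⟨x, hx, rfl⟩ := mem_image.1 hyX
    have := hmin x (mem_filter.2 ⟨hXY hx, by simpa using hy.2⟩)
    simp only [id] at this
    omega
  calc #X + #(Y.image (Int.cast : ℤ → ZMod l))
      ≤ #X + #(Y \ X.image (· + (l : ℤ))) := by
        gcongr
        exact (card_le_card himg).trans card_image_le
    _ = #Y := by
        rw [← card_image_of_injective X (add_left_injective (l : ℤ)), add_comm,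
          card_sdiff_add_card_eq_card hsub]

theorem image_hfold (l j : ℕ) (A : Finset ℤ) :
    (hfold j A).image (Int.cast : ℤ → ZMod l) = j • A.image (Int.cast : ℤ → ZMod l) := by
  induction j with
  | zero => simp [hfold, ← singleton_zero]
  | succ j ih =>
    rw [hfold, succ_nsmul', ← ih]
    exact image_add (Int.castRingHom (ZMod l))

theorem eq_top_of_gcd_eq_one {l : ℕ} {A : Finset ℤ} (hgcd : A.gcd id = 1)
    (H : AddSubgroup (ZMod l)) (hH : ∀ b ∈ A.image (Int.cast : ℤ → ZMod l), b ∈ H) : H = ⊤ := by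
  obtain ⟨g, hg⟩ := Int.subgroup_cyclic (H.comap (Int.castAddHom (ZMod l)))
  rw [← AddSubgroup.zmultiples_eq_closure] at hg
  have hdvd : g ∣ A.gcd id := by
    refine dvd_gcd fun a ha => ?_
    rw [id, ← Int.mem_zmultiples_iff, ← hg]
    exact hH _ (mem_image_of_mem _ ha)
  rw [hgcd] at hdvd
  rw [eq_top_iff]
  intro x _
  obtain ⟨y, rfl⟩ := ZMod.intCast_surjective x
  have : y ∈ H.comap (Int.castAddHom (ZMod l)) := by
    rw [hg, Int.mem_zmultiples_iff]
    exact hdvd.trans (one_dvd y)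
  exact this

theorem min_card_add_two_le_card_add {l : ℕ} [NeZero l] {B : Finset (ZMod l)} (h0 : 0 ∈ B)
    (hgen : ∀ H : AddSubgroup (ZMod l), (∀ b ∈ B, b ∈ H) → H = ⊤) (hB : 3 ≤ #B)
    (S : Finset (ZMod l)) (hS : S.Nonempty) : min l (#S + 2) ≤ #(S + B) := by
  by_contra! hlt
  rw [lt_min_iff] at hlt
  have := eq_univ_of_add_eq hgen (hS.add ⟨0, h0⟩)
    (add_add_eq_of_card_add_le h0 hB (by omega))
  rw [this, card_univ, ZMod.card] at hlt
  omega

theorem card_image_intCast_of_max {l : ℕ} {A : Finset ℤ} (hlA : (l : ℤ) ∈ A)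
    (hnn : ∀ a ∈ A, 0 ≤ a) (hmax : ∀ a ∈ A, a ≤ l) :
    #A ≤ #(A.image (Int.cast : ℤ → ZMod l)) + 1 := by
  have hinj : Set.InjOn (Int.cast : ℤ → ZMod l) (A.erase l) := by
    intro x hx y hy hxy
    simp only [coe_erase, Set.mem_sdiff, mem_coe, Set.mem_singleton_iff] at hx hy
    have hx1 := hnn x hx.1
    have hx2 := hmax x hx.1
    have hy1 := hnn y hy.1
    have hy2 := hmax y hy.1
    have hmod := (ZMod.intCast_eq_intCast_iff x y l).1 hxy
    rwa [Int.ModEq, Int.emod_eq_of_lt hx1 (by omega), Int.emod_eq_of_lt hy1 (by omega)] at hmod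
  rw [← card_erase_add_one hlA, ← card_image_of_injOn hinj]
  gcongr
  exact erase_subset _ _

theorem twelve_le_card_add_self_of_card_eq_five {l : ℕ} {A : Finset ℤ} (hcard : #A = 5)
    (h0 : (0 : ℤ) ∈ A) (hnn : ∀ a ∈ A, 0 ≤ a) (hgcd : A.gcd id = 1) (hlA : (l : ℤ) ∈ A)
    (hmax : ∀ a ∈ A, a ≤ l) (hl : 8 ≤ l) : 12 ≤ #(A + A) := by
  have hm : ∀ i, A.orderEmbOfFin hcard i ∈ A := A.orderEmbOfFin_mem hcard
  have hlt : ∀ i j, i < j → A.orderEmbOfFin hcard i < A.orderEmbOfFin hcard j :=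
    fun i j hij => (A.orderEmbOfFin hcard).strictMono hij
  have hr : ∀ x ∈ A, ∃ i, A.orderEmbOfFin hcard i = x := fun x hx => by
    have := A.range_orderEmbOfFin hcard
    rw [Set.ext_iff] at this
    exact (this x).2 hx
  generalize A.orderEmbOfFin hcard = f at hm hlt hr
  have h01 := hlt 0 1 (by decide)
  have h12 := hlt 1 2 (by decide)
  have h23 := hlt 2 3 (by decide)
  have h34 := hlt 3 4 (by decide)
  have hA : A = {f 0, f 1, f 2, f 3, f 4} := by
    ext x
    constructor
    · intro hx
      obtain ⟨i, rfl⟩ := hr x hx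
      fin_cases i <;> simp
    · intro hx
      simp only [mem_insert, mem_singleton] at hx
      rcases hx with rfl | rfl | rfl | rfl | rfl <;> exact hm _
  have hf0 : f 0 = 0 := by
    have := hnn _ (hm 0)
    rw [hA] at h0
    simp only [mem_insert, mem_singleton] at h0
    omega
  have hf4 : f 4 = l := by
    have := hmax _ (hm 4)
    rw [hA] at hlA
    simp only [mem_insert, mem_singleton] at hlA
    omega
  rw [hf0] at h01 hA
  rw [hf4] at h34 hA
  rw [hA]
  refine twelve_le_card_add_self h01 h12 h23 h34 (by omega) fun g hg ha hb hc hd => ?_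
  have : g ∣ A.gcd id := by
    refine dvd_gcd fun x hx => ?_
    rw [hA] at hx
    simp only [mem_insert, mem_singleton] at hx
    rcases hx with rfl | rfl | rfl | rfl | rfl <;> simp [*]
  rw [hgcd] at this
  exact Int.eq_one_of_dvd_one hg.le this

/-- Lower bound for the sumsets of a set of integers of length at least `#A + 3`. -/
theorem le_card_hfold {l h : ℕ} (hh : 2 ≤ h) {A : Finset ℤ} (hcard : 5 ≤ #A)
    (h0 : (0 : ℤ) ∈ A) (hnn : ∀ a ∈ A, 0 ≤ a) (hgcd : A.gcd id = 1) (hlA : (l : ℤ) ∈ A)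
    (hmax : ∀ a ∈ A, a ≤ l) (hl : #A + 3 ≤ l) : h * #A + 3 * h ≤ #(hfold h A) + 4 := by
  have : NeZero l := ⟨by omega⟩
  have hgen := eq_top_of_gcd_eq_one (l := l) hgcd
  have hB := card_image_intCast_of_max hlA hnn hmax
  have hstep (j : ℕ) : #(hfold j A) + #((j + 1) • A.image (Int.cast : ℤ → ZMod l)) ≤
      #(hfold (j + 1) A) := by
    rw [← image_hfold]
    refine card_add_card_image_le (by omega) (subset_add_right _ h0) fun x hx => ?_
    rw [hfold, add_comm x]
    exact add_mem_add hlA hx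
  have h0B : (0 : ZMod l) ∈ A.image (Int.cast : ℤ → ZMod l) :=
    mem_image.2 ⟨0, h0, Int.cast_zero⟩
  generalize A.image (Int.cast : ℤ → ZMod l) = B at hgen hB hstep h0B
  have hgrow := min_card_add_two_le_card_add h0B hgen (by omega)
  have hB2 := hgrow B ⟨0, h0B⟩
  have hB3 := hgrow (B + B) ⟨0 + 0, add_mem_add h0B h0B⟩
  have hBj (j : ℕ) (hj : 2 ≤ j) : #A + 3 ≤ #((j + 1) • B) := by
    have : B + B + B ⊆ (j + 1) • B := by
      have := nsmul_subset_nsmul_right h0B (show 3 ≤ j + 1 by omega)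
      rwa [show 3 • B = B + B + B by rw [succ_nsmul, two_nsmul]] at this
    have := card_le_card this
    omega
  induction h, hh using Nat.le_induction with
  | base =>
    have hA2 : hfold 2 A = A + A := by simp [hfold, singleton_zero]
    rcases hcard.eq_or_lt with h5 | h5
    · have := twelve_le_card_add_self_of_card_eq_five h5.symm h0 hnn hgcd hlA hmax (by omega)
      rw [hA2]
      omega
    · have h2 := hstep 1
      have hA1 : hfold 1 A = A := by simp [hfold, singleton_zero]
      rw [hA1, one_add_one_eq_two, two_nsmul] at h2
      have h32 := card_le_card_add_self_of_lt_three_halves h0B hgen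
      rw [ZMod.card] at h32
      omega
  | succ h hh ih =>
    have := hstep h
    have := hBj h hh
    rw [add_mul, mul_add]
    omega

theorem stmt1 (h k : ℕ) (hh : 2 ≤ h) (hk : 5 ≤ k) (A : Finset ℤ)
    (hcard : A.card = k) (h0 : (0 : ℤ) ∈ A) (hnn : ∀ a ∈ A, 0 ≤ a)
    (hgcd : A.gcd id = 1)
    (hsum : (hfold h A).card < h * k + 3 * h - 4) :
    ∀ a ∈ A, a ≤ (k : ℤ) + 2 := by
  by_contra! hex
  obtain ⟨a, ha, hak⟩ := hex
  obtain ⟨m, hm, hmax⟩ := exists_max_image A id ⟨a, ha⟩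
  simp only [id] at hmax
  have ham := hmax a ha
  lift m to ℕ using hnn m hm
  have := le_card_hfold hh (hcard ▸ hk) h0 hnn hgcd hm hmax (by omega)
  rw [hcard] at this
  omega
end
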